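/- For every k ∈ ℕ and every Δ ∈ {≤, =}, we have the strict inclusions L(CD_1, CF[−λ], (t∧Δk)) ⊊ L(CD_2, CF[−λ], (t∧Δ1)) ⊊ L(CD_3, CF[−λ], (t∧Δk)), both with and without erasing rules. -/

import Mathlib

namespace CDHybrid

/-- Symbols: nonterminals are natural numbers, terminals come from `T`. -/
abbrev Symb (T : Type) := ℕ ⊕ T

/-- Sentential forms. -/
abbrev SForm (T : Type) := List (Symb T)

/-- A context-free rule `A → z`. -/
abbrev Rule (T : Type) := ℕ × SForm T

/-- Number of nonterminal occurrences in a sentential form. -/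
def ntCount {T : Type} (x : SForm T) : ℕ := (x.filter Sum.isLeft).length

/-- One rewriting step using some rule of the rule set `P`. -/
def RStep {T : Type} (P : List (Rule T)) (x y : SForm T) : Prop :=
  ∃ r ∈ P, ∃ u v : SForm T, x = u ++ Sum.inl r.1 :: v ∧ y = u ++ r.2 ++ v

/-- `m`-step derivation using only rules of `P`. -/
def StepsN {T : Type} (P : List (Rule T)) : ℕ → SForm T → SForm T → Prop
  | 0, x, y => x = y
  | m + 1, x, y => ∃ z, RStep P x z ∧ StepsN P m z y

/-- `m`-step derivation using only rules of `P`, all intermediate (and the final)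
sentential forms having at most `b` occurrences of nonterminals. -/
def StepsNB {T : Type} (P : List (Rule T)) (b : ℕ) : ℕ → SForm T → SForm T → Prop
  | 0, x, y => x = y
  | m + 1, x, y => ∃ z, RStep P x z ∧ ntCount z ≤ b ∧ StepsNB P b m z y

/-- Derivation modes of CD grammar systems. -/
inductive Mode where
  | eq : ℕ → Mode
  | le : ℕ → Mode
  | ge : ℕ → Mode
  | star : Mode
  | t : Mode
  | conj : Mode → Mode → Mode

/-- The predicate of a derivation mode: `modeOK P f m y` holds if an `m`-step
derivation by the component `P` ending in `y` is acceptable for mode `f`. -/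
def modeOK {T : Type} (P : List (Rule T)) : Mode → ℕ → SForm T → Prop
  | .eq k, m, _ => m = k
  | .le k, m, _ => m ≤ k
  | .ge k, m, _ => k ≤ m
  | .star, _, _ => True
  | .t, _, y => ¬ ∃ z, RStep P y z
  | .conj f g, m, y => modeOK P f m y ∧ modeOK P g m y

/-- A CD grammar system with context-free components. -/
structure CDGS (T : Type) where
  deg : ℕ
  start : ℕ
  comp : Fin deg → List (Rule T)

/-- λ-freeness: no erasing rules. -/
def CDGS.LamFree {T : Type} (G : CDGS T) : Prop :=
  ∀ i : Fin G.deg, ∀ r ∈ G.comp i, r.2 ≠ []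

/-- One derivation step of a component of `G` in mode `f`. -/
def CDGS.ModeStep {T : Type} (G : CDGS T) (f : Mode) (x y : SForm T) : Prop :=
  ∃ i : Fin G.deg, ∃ m : ℕ, StepsN (G.comp i) m x y ∧ modeOK (G.comp i) f m y

/-- One derivation step of a component of `G` in mode `f`, with all produced
sentential forms having at most `b` nonterminal occurrences. -/
def CDGS.ModeStepB {T : Type} (G : CDGS T) (f : Mode) (b : ℕ) (x y : SForm T) : Prop :=
  ∃ i : Fin G.deg, ∃ m : ℕ, StepsNB (G.comp i) b m x y ∧ modeOK (G.comp i) f m y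

/-- The language generated by `G` in mode `f`. -/
def CDGS.lang {T : Type} (G : CDGS T) (f : Mode) : Set (List T) :=
  { w | Relation.TransGen (G.ModeStep f) [Sum.inl G.start] (w.map Sum.inr) }

/-- The words of the language of `G` in mode `f` possessing a derivation of index
at most `b`, i.e., all sentential forms occurring in it have at most `b`
nonterminal occurrences. -/
def CDGS.langB {T : Type} (G : CDGS T) (f : Mode) (b : ℕ) : Set (List T) :=
  { w | ntCount ([Sum.inl G.start] : SForm T) ≤ b ∧
      Relation.TransGen (G.ModeStepB f b) [Sum.inl G.start] (w.map Sum.inr) }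

/-- Two languages are considered equal iff they differ at most in the empty word. -/
def EqL {T : Type} (L₁ L₂ : Set (List T)) : Prop := L₁ \ {[]} = L₂ \ {[]}

/-- The family `L(CD_n, CF[−λ], f)`; `lf = true` forbids erasing rules. -/
def CDFam (T : Type) (lf : Bool) (n : ℕ) (f : Mode) : Set (Set (List T)) :=
  { L | ∃ G : CDGS T, G.deg ≤ n ∧ (lf = true → G.LamFree) ∧ EqL (G.lang f) L }

/-- The family `L(CD_∞, CF[−λ], f)`. -/
def CDFamInf (T : Type) (lf : Bool) (f : Mode) : Set (Set (List T)) :=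
  { L | ∃ G : CDGS T, (lf = true → G.LamFree) ∧ EqL (G.lang f) L }

/-- The family `L_m(CD_n, CF[−λ], f)` of such languages of index at most `m`. -/
def CDFamInd (T : Type) (lf : Bool) (n : ℕ) (f : Mode) (m : ℕ) : Set (Set (List T)) :=
  { L | ∃ G : CDGS T, G.deg ≤ n ∧ (lf = true → G.LamFree) ∧ EqL (G.lang f) L ∧
      G.lang f ⊆ G.langB f m }

/-- The family `L_m(CD_∞, CF[−λ], f)`. -/
def CDFamIndInf (T : Type) (lf : Bool) (f : Mode) (m : ℕ) : Set (Set (List T)) :=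
  { L | ∃ G : CDGS T, (lf = true → G.LamFree) ∧ EqL (G.lang f) L ∧ G.lang f ⊆ G.langB f m }

/-- The family `L_fin(CD_∞, CF[−λ], f)`. -/
def CDFamFinInf (T : Type) (lf : Bool) (f : Mode) : Set (Set (List T)) :=
  { L | ∃ m : ℕ, 1 ≤ m ∧ L ∈ CDFamIndInf T lf f m }

/-- A context-free grammar. -/
structure CFG (T : Type) where
  start : ℕ
  rules : List (Rule T)

/-- The language generated by a context-free grammar. -/
def CFG.lang {T : Type} (G : CFG T) : Set (List T) :=
  { w | Relation.ReflTransGen (RStep G.rules) [Sum.inl G.start] (w.map Sum.inr) }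

/-- The words of `G.lang` having a derivation of index at most `m`. -/
def CFG.langB {T : Type} (G : CFG T) (m : ℕ) : Set (List T) :=
  { w | ntCount ([Sum.inl G.start] : SForm T) ≤ m ∧
      Relation.ReflTransGen (fun x y => RStep G.rules x y ∧ ntCount y ≤ m)
        [Sum.inl G.start] (w.map Sum.inr) }

/-- The family `L(CF)` of context-free languages. -/
def CFFam (T : Type) : Set (Set (List T)) := { L | ∃ G : CFG T, EqL G.lang L }

/-- The family `L_m(CF)` of context-free languages of index at most `m`. -/
def CFFamInd (T : Type) (m : ℕ) : Set (Set (List T)) :=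
  { L | ∃ G : CFG T, EqL G.lang L ∧ G.lang ⊆ G.langB m }

/-- The family `L_fin(CF)` of context-free languages of finite index. -/
def CFFamFin (T : Type) : Set (Set (List T)) :=
  { L | ∃ m : ℕ, 1 ≤ m ∧ L ∈ CFFamInd T m }

/-- A grammar is linear if every right-hand side contains at most one nonterminal. -/
def CFG.Linear {T : Type} (G : CFG T) : Prop := ∀ r ∈ G.rules, ntCount r.2 ≤ 1

/-- The family `L(LIN)` of linear context-free languages. -/
def LinFam (T : Type) : Set (Set (List T)) :=
  { L | ∃ G : CFG T, G.Linear ∧ EqL G.lang L }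

/-- The family `L(FIN)` of finite languages. -/
def FinFam (T : Type) : Set (Set (List T)) := { L | L.Finite }

/-- A programmed grammar with context-free rules. -/
structure PG (T : Type) where
  start : ℕ
  nLab : ℕ
  rule : Fin nLab → Rule T
  succ : Fin nLab → Set (Fin nLab)
  fail : Fin nLab → Set (Fin nLab)

def PG.LamFree {T : Type} (G : PG T) : Prop := ∀ r : Fin G.nLab, (G.rule r).2 ≠ []

/-- No appearance checking: all failure fields are empty. -/
def PG.NoAC {T : Type} (G : PG T) : Prop := ∀ r : Fin G.nLab, G.fail r = ∅

/-- One step of a programmed grammar on pairs (sentential form, label). -/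
def PG.PStep {T : Type} (G : PG T) (p q : SForm T × Fin G.nLab) : Prop :=
  (∃ u v : SForm T, p.1 = u ++ Sum.inl (G.rule p.2).1 :: v ∧
      q.1 = u ++ (G.rule p.2).2 ++ v ∧ q.2 ∈ G.succ p.2) ∨
  (Sum.inl (G.rule p.2).1 ∉ p.1 ∧ q.1 = p.1 ∧ q.2 ∈ G.fail p.2)

/-- The language generated by a programmed grammar. -/
def PG.lang {T : Type} (G : PG T) : Set (List T) :=
  { w | ∃ r₁ r₂ : Fin G.nLab,
      Relation.ReflTransGen G.PStep ([Sum.inl G.start], r₁) (w.map Sum.inr, r₂) }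

/-- The words of `G.lang` having a derivation of index at most `m`. -/
def PG.langB {T : Type} (G : PG T) (m : ℕ) : Set (List T) :=
  { w | ∃ r₁ r₂ : Fin G.nLab, ntCount ([Sum.inl G.start] : SForm T) ≤ m ∧
      Relation.ReflTransGen (fun p q => G.PStep p q ∧ ntCount q.1 ≤ m)
        ([Sum.inl G.start], r₁) (w.map Sum.inr, r₂) }

/-- The family `L_m(P, CF[−λ][, ac])`: programmed languages of index at most `m`;
`ac = false` forbids appearance checking, `lf = true` forbids erasing rules. -/
def PFamInd (T : Type) (lf ac : Bool) (m : ℕ) : Set (Set (List T)) :=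
  { L | ∃ G : PG T, (lf = true → G.LamFree) ∧ (ac = false → G.NoAC) ∧
      EqL G.lang L ∧ G.lang ⊆ G.langB m }

/-- The family `L_fin(P, CF[−λ][, ac])` of programmed languages of finite index. -/
def PFamFin (T : Type) (lf ac : Bool) : Set (Set (List T)) :=
  { L | ∃ m : ℕ, 1 ≤ m ∧ L ∈ PFamInd T lf ac m }

/-!
With a single component, mode `t` leaves nothing to rewrite after the first step, and a step of
boundedly many rewritings has finitely many results: all languages are finite. With two components
in mode `t ∧ Δ1`, only the component that did not make the last step can be applicable, and a second
nonterminal beside the rewritten one would remain blocked for both of them forever. Hence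
terminating derivations are linear, and conversely a linear grammar is simulated by two components
that alternate between two copies of its nonterminals, loops `A → A` padding each step to any
prescribed number of rewritings. With three components, two nonterminals can be kept alive by always
renaming the one just rewritten to the third copy. This yields a language of Dyck words, with `a` as
opening and `b` as closing bracket, that contains all `aⁿ bⁿ aⁿ bⁿ`. It is not linear: exchanging
the cores of two such words between contexts of different lengths unbalances the brackets.
-/

section SententialForms

variable {T : Type}

/-- The sentential form consisting of the letters of a terminal word. -/
abbrev ofWord (w : List T) : SForm T := w.map Sum.inr

theorem ofWord_injective : Function.Injective (ofWord (T := T)) :=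
  List.map_injective_iff.2 Sum.inr_injective

theorem inl_notMem_ofWord (A : ℕ) (w : List T) : Sum.inl A ∉ ofWord w := by simp

theorem ntCount_append (x y : SForm T) : ntCount (x ++ y) = ntCount x + ntCount y := by
  simp [ntCount]

theorem ntCount_cons_inl (A : ℕ) (x : SForm T) : ntCount (Sum.inl A :: x) = ntCount x + 1 := rfl

theorem ntCount_pos_iff {x : SForm T} : 0 < ntCount x ↔ ∃ A, Sum.inl A ∈ x := by
  simp [ntCount, List.length_pos_iff_exists_mem]

theorem ntCount_ofWord (w : List T) : ntCount (ofWord w) = 0 :=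
  Nat.eq_zero_of_not_pos fun h => (ntCount_pos_iff.1 h).elim fun A => inl_notMem_ofWord A w

theorem exists_eq_ofWord {x : SForm T} (h : ntCount x = 0) : ∃ w, x = ofWord w := by
  suffices x ∈ Set.range (List.map Sum.inr) from this.imp fun _ => Eq.symm
  rw [Set.range_list_map]
  rintro (A | a) hs
  · exact absurd (ntCount_pos_iff.2 ⟨A, hs⟩) h.not_gt
  · exact ⟨a, rfl⟩

theorem exists_eq_of_ntCount_eq_one {x : SForm T} (h : ntCount x = 1) :
    ∃ u A v, x = ofWord u ++ Sum.inl A :: ofWord v := by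
  obtain ⟨A, hA⟩ := ntCount_pos_iff.1 (h.symm ▸ Nat.one_pos)
  obtain ⟨s, t, rfl⟩ := List.append_of_mem hA
  rw [ntCount_append, ntCount_cons_inl] at h
  obtain ⟨u, rfl⟩ := exists_eq_ofWord (x := s) (by omega)
  obtain ⟨v, rfl⟩ := exists_eq_ofWord (x := t) (by omega)
  exact ⟨u, A, v, rfl⟩

end SententialForms

section Derivations

variable {T : Type} {P : List (Rule T)} {x y z : SForm T} {w : List T}

/-- `x ⇒* y` by rules of `P`. -/
abbrev Derives (P : List (Rule T)) : SForm T → SForm T → Prop := Relation.ReflTransGen (RStep P)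

/-- No rule of `P` is applicable to `x`: the stopping condition of the mode `t`. -/
def Exhausted (P : List (Rule T)) (x : SForm T) : Prop := ∀ r ∈ P, Sum.inl r.1 ∉ x

theorem not_exists_rStep_iff_exhausted : (¬ ∃ z, RStep P x z) ↔ Exhausted P x := by
  constructor
  · intro h r hr hmem
    obtain ⟨u, v, rfl⟩ := List.append_of_mem hmem
    exact h ⟨_, r, hr, u, v, rfl, rfl⟩
  · rintro h ⟨z, r, hr, u, v, rfl, rfl⟩
    exact h r hr (by simp)

theorem exhausted_ofWord (P : List (Rule T)) (w : List T) : Exhausted P (ofWord w) :=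
  fun r _ => inl_notMem_ofWord r.1 w

theorem Exhausted.not_rStep (h : Exhausted P x) : ¬ RStep P x y :=
  fun hs => not_exists_rStep_iff_exhausted.2 h ⟨y, hs⟩

theorem Exhausted.eq_of_derives (hx : Exhausted P x) (h : Derives P x y) : y = x := by
  rcases h.cases_head with rfl | ⟨_, hs, -⟩
  · rfl
  · exact absurd hs hx.not_rStep

theorem RStep.of_mem {A : ℕ} (h : (A, z) ∈ P) (u v : SForm T) :
    RStep P (u ++ Sum.inl A :: v) (u ++ z ++ v) :=
  ⟨(A, z), h, u, v, rfl, rfl⟩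

theorem RStep.append (h : RStep P x y) (u v : SForm T) : RStep P (u ++ x ++ v) (u ++ y ++ v) := by
  obtain ⟨r, hr, p, q, rfl, rfl⟩ := h
  simpa using RStep.of_mem hr (u ++ p) (q ++ v)

theorem Derives.append (h : Derives P x y) (u v : SForm T) :
    Derives P (u ++ x ++ v) (u ++ y ++ v) :=
  h.lift (fun s => u ++ s ++ v) fun _ _ hs => hs.append u v

theorem RStep.exists_of_ntCount_le_one (h : RStep P x y) (hx : ntCount x ≤ 1) :
    ∃ r ∈ P, ∃ u v : List T,
      x = ofWord u ++ Sum.inl r.1 :: ofWord v ∧ y = ofWord u ++ r.2 ++ ofWord v := by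
  obtain ⟨r, hr, u, v, rfl, rfl⟩ := h
  rw [ntCount_append, ntCount_cons_inl] at hx
  obtain ⟨u, rfl⟩ := exists_eq_ofWord (x := u) (by omega)
  obtain ⟨v, rfl⟩ := exists_eq_ofWord (x := v) (by omega)
  exact ⟨r, hr, u, v, rfl, rfl⟩

theorem RStep.of_ofWord_append {u : List T} (h : RStep P (ofWord u ++ x) y) :
    ∃ x', RStep P x x' ∧ y = ofWord u ++ x' := by
  obtain ⟨⟨A, z⟩, hr, p, q, hx, rfl⟩ := h
  rcases List.append_eq_append_iff.1 hx with ⟨p', rfl, rfl⟩ | ⟨c, hu, hq⟩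
  · exact ⟨p' ++ z ++ q, .of_mem hr p' q, by simp⟩
  · rcases List.cons_eq_append_iff.1 hq with ⟨rfl, rfl⟩ | ⟨c', rfl, -⟩
    · exact ⟨z ++ q, .of_mem hr [] q, by simp [hu]⟩
    · exact absurd (hu ▸ by simp) (inl_notMem_ofWord A u)

theorem RStep.of_append_ofWord {v : List T} (h : RStep P (x ++ ofWord v) y) :
    ∃ x', RStep P x x' ∧ y = x' ++ ofWord v := by
  obtain ⟨⟨A, z⟩, hr, p, q, hx, rfl⟩ := h
  rcases List.append_eq_append_iff.1 hx with ⟨p', rfl, hv⟩ | ⟨c, rfl, hq⟩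
  · exact absurd (hv ▸ by simp) (inl_notMem_ofWord A v)
  · rcases List.cons_eq_append_iff.1 hq with ⟨-, hv⟩ | ⟨c', rfl, rfl⟩
    · exact absurd (hv ▸ by simp) (inl_notMem_ofWord A v)
    · exact ⟨p ++ z ++ c', .of_mem hr p c', by simp⟩

theorem Derives.of_ofWord_append_append {u v : List T}
    (h : Derives P (ofWord u ++ x ++ ofWord v) y) :
    ∃ x', Derives P x x' ∧ y = ofWord u ++ x' ++ ofWord v := by
  induction h with
  | refl => exact ⟨x, .refl, rfl⟩
  | tail _ hs ih =>
    obtain ⟨x', hx', rfl⟩ := ih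
    obtain ⟨s, hs', rfl⟩ := hs.of_append_ofWord
    obtain ⟨x'', hx'', rfl⟩ := hs'.of_ofWord_append
    exact ⟨x'', hx'.tail hx'', rfl⟩

theorem Derives.exists_word_of_ofWord_append_append {u v : List T}
    (h : Derives P (ofWord u ++ x ++ ofWord v) (ofWord w)) :
    ∃ w', Derives P x (ofWord w') ∧ w = u ++ w' ++ v := by
  obtain ⟨x', hx, hw⟩ := h.of_ofWord_append_append
  have hx' : ntCount x' = 0 := by
    have := ntCount_ofWord w
    rw [hw, ntCount_append, ntCount_append] at this
    omega
  obtain ⟨w', rfl⟩ := exists_eq_ofWord hx'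
  exact ⟨w', hx, ofWord_injective (by simpa using hw)⟩

theorem Derives.exists_mem_of_singleton {A : ℕ} (h : Derives P [Sum.inl A] (ofWord w)) :
    ∃ r ∈ P, r.1 = A := by
  by_contra! hA
  have hex : Exhausted P [Sum.inl A] := fun r hr => by simpa using hA r hr
  exact inl_notMem_ofWord A w (hex.eq_of_derives h ▸ List.mem_singleton_self _)

theorem Derives.inl_mem_of_forall_ne {A : ℕ} (h : Derives P x y) (hA : ∀ r ∈ P, r.1 ≠ A)
    (hx : Sum.inl A ∈ x) : Sum.inl A ∈ y := by
  induction h with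
  | refl => exact hx
  | tail _ hs ih =>
    obtain ⟨r, hr, u, v, rfl, rfl⟩ := hs
    have hne := (hA r hr).symm
    simp only [List.mem_append, List.mem_cons, Sum.inl.injEq, hne, false_or] at ih ⊢
    tauto

/-- Discrete intermediate value property: a single step lengthens a form by less than `M`. -/
theorem Derives.exists_length_mem_Icc {M ℓ : ℕ} (hM : ∀ r ∈ P, r.2.length ≤ M)
    (h : Derives P x z) (hx : x.length ≤ ℓ + M) (hz : ℓ ≤ z.length) :
    ∃ y, Derives P x y ∧ Derives P y z ∧ y.length ∈ Set.Icc ℓ (ℓ + M) := by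
  induction h using Relation.ReflTransGen.head_induction_on with
  | refl => exact ⟨z, .refl, .refl, hz, hx⟩
  | @head x x' hs hx'z ih =>
    by_cases hℓ : ℓ ≤ x.length
    · exact ⟨x, .refl, hx'z.head hs, hℓ, hx⟩
    · have hx' : x'.length ≤ ℓ + M := by
        obtain ⟨r, hr, u, v, rfl, rfl⟩ := hs
        have := hM r hr
        simp only [List.length_append, List.length_cons] at hℓ ⊢
        omega
      obtain ⟨y, hy, hyz, hlen⟩ := ih hx'
      exact ⟨y, hy.head hs, hyz, hlen⟩

theorem StepsN.derives {m : ℕ} (h : StepsN P m x y) : Derives P x y := by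
  induction m generalizing x with
  | zero => exact h ▸ .refl
  | succ m ih =>
    obtain ⟨s, hs, h⟩ := h
    exact (ih h).head hs

theorem stepsN_succ_of_loop {A : ℕ} (hloop : (A, [Sum.inl A]) ∈ P) (hz : (A, z) ∈ P)
    (u v : SForm T) (m : ℕ) : StepsN P (m + 1) (u ++ Sum.inl A :: v) (u ++ z ++ v) := by
  induction m with
  | zero => exact ⟨_, .of_mem hz u v, rfl⟩
  | succ m ih => exact ⟨_, .of_mem hloop u v, by simpa using ih⟩

theorem finite_setOf_rStep (P : List (Rule T)) (x : SForm T) : {y | RStep P x y}.Finite := by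
  have hfin : ({r | r ∈ P} ×ˢ Set.Iic x.length).Finite :=
    P.finite_toSet.prod (Set.finite_Iic _)
  refine (hfin.image fun q => x.take q.2 ++ q.1.2 ++ x.drop (q.2 + 1)).subset ?_
  rintro y ⟨r, hr, u, v, rfl, rfl⟩
  exact ⟨(r, u.length), ⟨hr, by simp⟩, by simp⟩

theorem finite_setOf_stepsN (P : List (Rule T)) (m : ℕ) (x : SForm T) :
    {y | StepsN P m x y}.Finite := by
  induction m generalizing x with
  | zero => exact (Set.finite_singleton x).subset fun _ => Eq.symm
  | succ m ih =>
    refine ((finite_setOf_rStep P x).biUnion fun z _ => ih z).subset ?_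
    rintro y ⟨z, hxz, hzy⟩
    exact Set.mem_biUnion (show z ∈ {z | RStep P x z} from hxz) hzy

end Derivations

section LinearGrammars

variable {T : Type} {H : CFG T}

namespace CFG.Linear

theorem ntCount_le_one_of_derives (hH : H.Linear) {x y : SForm T} (h : Derives H.rules x y)
    (hx : ntCount x ≤ 1) : ntCount y ≤ 1 := by
  induction h with
  | refl => exact hx
  | tail _ hs ih =>
    obtain ⟨r, hr, u, v, rfl, rfl⟩ := hs
    have := hH r hr
    simp only [ntCount_append, ntCount_cons_inl] at ih ⊢
    omega

theorem exists_splitting (hH : H.Linear) {w : List T} (hw : w ∈ H.lang) {M ℓ : ℕ}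
    (hM : ∀ r ∈ H.rules, r.2.length ≤ M) (hpos : 0 < M) (hℓ : ℓ + M < w.length) :
    ∃ u x v, ∃ r ∈ H.rules, w = u ++ x ++ v ∧
      Derives H.rules [Sum.inl H.start] (ofWord u ++ Sum.inl r.1 :: ofWord v) ∧
      Derives H.rules [Sum.inl r.1] (ofWord x) ∧
      u.length + v.length + 1 ∈ Set.Icc ℓ (ℓ + M) := by
  obtain ⟨y, hy, hyw, hlen⟩ := Derives.exists_length_mem_Icc (ℓ := ℓ) hM hw
    (by simp only [List.length_singleton]; omega) (by rw [List.length_map]; omega)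
  have hy1 : ntCount y = 1 := by
    refine (hH.ntCount_le_one_of_derives hy le_rfl).antisymm (Nat.pos_of_ne_zero fun h0 => ?_)
    obtain ⟨w', rfl⟩ := exists_eq_ofWord h0
    have := ofWord_injective ((exhausted_ofWord H.rules w').eq_of_derives hyw)
    simp only [List.length_map, Set.mem_Icc, ← this] at hlen
    omega
  obtain ⟨u, A, v, rfl⟩ := exists_eq_of_ntCount_eq_one hy1
  obtain ⟨x, hx, rfl⟩ := Derives.exists_word_of_ofWord_append_append
    (u := u) (x := [Sum.inl A]) (v := v) (by simpa using hyw)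
  obtain ⟨r, hr, rfl⟩ := hx.exists_mem_of_singleton
  exact ⟨u, x, v, r, hr, rfl, hy, hx, by simpa [add_assoc] using hlen⟩

/-- Linear derivations pass through sentential forms `u A v` of almost every length, so among the
words of a long enough list two use the same nonterminal inside contexts of different lengths, and
their cores may be exchanged. -/
theorem exists_interchange (hH : H.Linear) {w : ℕ → List T} (hw : ∀ n, w n ∈ H.lang)
    (hlen : ∀ n, n ≤ (w n).length) :
    ∃ m n u x v u' x' v', w m = u ++ x ++ v ∧ w n = u' ++ x' ++ v' ∧
      u.length + v.length ≤ m ∧ u'.length + v'.length ≤ n ∧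
      u.length + v.length < u'.length + v'.length ∧ u ++ x' ++ v ∈ H.lang := by
  obtain ⟨M, hM⟩ : ∃ M, ∀ r ∈ H.rules, r.2.length ≤ M := by
    obtain ⟨M, hM⟩ := (H.rules.finite_toSet.image fun r => r.2.length).bddAbove
    exact ⟨M, fun r hr => hM ⟨r, hr, rfl⟩⟩
  let N := M + 2
  have hsplit (j : ℕ) := hH.exists_splitting (hw ((j + 2) * N)) (ℓ := j * N) (M := M + 1)
    (fun r hr => (hM r hr).trans M.le_succ) M.succ_pos
    (lt_of_lt_of_le (by grind) (hlen _))
  choose u x v r hr hwj hctx hcore hl using hsplit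
  obtain ⟨i, j, hij, hrij⟩ := Set.Finite.exists_lt_map_eq_of_forall_mem hr H.rules.finite_toSet
  have hN : (i + 1) * N ≤ j * N := Nat.mul_le_mul_right N hij
  have hi := hl i
  have hj := hl j
  rw [Set.mem_Icc] at hi hj
  refine ⟨_, _, u i, x i, v i, u j, x j, v j, hwj i, hwj j, ?_, ?_, ?_, ?_⟩
  · grind
  · grind
  · grind
  · refine (hctx i).trans ?_
    simpa [hrij] using (hcore j).append (ofWord (u i)) (ofWord (v i))

end CFG.Linear

end LinearGrammars

section Modes

variable {T : Type} {f : Mode} {k : ℕ}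

/-- `f` accepts derivations of exactly `k` steps and none with more steps; both `≤k` and `=k` are
of this kind. -/
def Mode.HasMaxSteps (T : Type) (f : Mode) (k : ℕ) : Prop :=
  ∀ (P : List (Rule T)) (y : SForm T), IsGreatest {m | modeOK P f m y} k

theorem Mode.hasMaxSteps_le (T : Type) (k : ℕ) : (Mode.le k).HasMaxSteps T k :=
  fun _ _ => isGreatest_Iic

theorem Mode.hasMaxSteps_eq (T : Type) (k : ℕ) : (Mode.eq k).HasMaxSteps T k :=
  fun _ _ => isGreatest_singleton

namespace CDGS

/-- `x ⇒ … ⇒ y` by steps of components of `G` working in mode `f`. -/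
abbrev DerivesIn (G : CDGS T) (f : Mode) : SForm T → SForm T → Prop :=
  Relation.ReflTransGen (G.ModeStep f)

variable {G : CDGS T} {x y : SForm T} {w : List T}

theorem ModeStep.exists_derives (h : G.ModeStep f x y) : ∃ i, Derives (G.comp i) x y :=
  let ⟨i, _, hs, _⟩ := h
  ⟨i, hs.derives⟩

theorem modeStep_t_of_stepsN (hf : f.HasMaxSteps T k) {i : Fin G.deg}
    (h : StepsN (G.comp i) k x y) (hy : Exhausted (G.comp i) y) : G.ModeStep (.conj .t f) x y :=
  ⟨i, k, h, not_exists_rStep_iff_exhausted.2 hy, (hf _ y).1⟩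

theorem modeStep_t_of_loop (hf : f.HasMaxSteps T k) (hk : 1 ≤ k) {i : Fin G.deg} {A : ℕ}
    {z : SForm T} (hloop : (A, [Sum.inl A]) ∈ G.comp i) (hz : (A, z) ∈ G.comp i) (u v : SForm T)
    (hex : Exhausted (G.comp i) (u ++ z ++ v)) :
    G.ModeStep (.conj .t f) (u ++ Sum.inl A :: v) (u ++ z ++ v) := by
  obtain ⟨m, rfl⟩ := Nat.exists_eq_add_of_le' hk
  exact modeStep_t_of_stepsN hf (stepsN_succ_of_loop hloop hz u v m) hex

theorem ModeStep.eq_or_rStep (hf : f.HasMaxSteps T 1) (h : G.ModeStep (.conj .t f) x y) :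
    x = y ∨ ∃ i, RStep (G.comp i) x y ∧ Exhausted (G.comp i) y := by
  obtain ⟨i, m, hs, ht, hm⟩ := h
  rcases Nat.le_one_iff_eq_zero_or_eq_one.1 ((hf _ y).2 hm) with rfl | rfl
  · exact .inl hs
  · obtain ⟨_, hs, rfl⟩ := hs
    exact .inr ⟨i, hs, not_exists_rStep_iff_exhausted.1 ht⟩

theorem mem_lang_iff :
    w ∈ G.lang f ↔ G.DerivesIn f [Sum.inl G.start] (ofWord w) := by
  refine ⟨fun h => Relation.TransGen.to_reflTransGen h, fun h => ?_⟩
  refine (Relation.reflTransGen_iff_eq_or_transGen.1 h).resolve_left fun hw => ?_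
  exact inl_notMem_ofWord G.start w (hw ▸ List.mem_singleton_self _)

end CDGS

end Modes

section OneComponent

variable {T : Type} {f : Mode} {k : ℕ}

namespace CDGS

variable {G : CDGS T} {x y z : SForm T}

theorem finite_setOf_modeStep (hf : f.HasMaxSteps T k) (x : SForm T) :
    {y | G.ModeStep (.conj .t f) x y}.Finite := by
  have hfin : (⋃ i : Fin G.deg, ⋃ m ∈ Set.Iic k, {y | StepsN (G.comp i) m x y}).Finite :=
    Set.finite_iUnion fun i => (Set.finite_Iic k).biUnion fun m _ => finite_setOf_stepsN _ m x
  refine hfin.subset ?_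
  rintro y ⟨i, m, hs, -, hm⟩
  exact Set.mem_iUnion.2 ⟨i, Set.mem_biUnion ((hf _ y).2 hm) hs⟩

theorem ModeStep.eq_of_modeStep (hG : G.deg ≤ 1) (hxy : G.ModeStep (.conj .t f) x y)
    (hyz : G.ModeStep (.conj .t f) y z) : z = y := by
  have : Subsingleton (Fin G.deg) := Fin.subsingleton_iff_le_one.2 hG
  obtain ⟨i, m, -, ht, -⟩ := hxy
  obtain ⟨j, hj⟩ := hyz.exists_derives
  rw [Subsingleton.elim j i] at hj
  exact (not_exists_rStep_iff_exhausted.1 ht).eq_of_derives hj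

theorem finite_lang_of_deg_le_one (hG : G.deg ≤ 1) (hf : f.HasMaxSteps T k) :
    (G.lang (.conj .t f)).Finite := by
  refine ((finite_setOf_modeStep (G := G) hf [Sum.inl G.start]).preimage
    ofWord_injective.injOn).subset fun w hw => ?_
  suffices ∀ y, Relation.TransGen (G.ModeStep (.conj .t f)) [Sum.inl G.start] y →
      G.ModeStep (.conj .t f) [Sum.inl G.start] y from this _ hw
  intro y h
  induction h with
  | single h => exact h
  | tail _ h ih => exact (ih.eq_of_modeStep hG h).symm ▸ ih

end CDGS

end OneComponent

section TwoComponents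

variable {T : Type} {f : Mode}

namespace CDGS

variable {G : CDGS T} {x y : SForm T} {w : List T}

theorem not_derivesIn_of_forall_ne {A : ℕ} (hA : ∀ i, ∀ r ∈ G.comp i, r.1 ≠ A)
    (hx : Sum.inl A ∈ x) : ¬ G.DerivesIn f x (ofWord w) := by
  intro h
  refine inl_notMem_ofWord A w ?_
  generalize ofWord w = y at h
  induction h with
  | refl => exact hx
  | tail _ hstep ih =>
    obtain ⟨i, hi⟩ := hstep.exists_derives
    exact hi.inl_mem_of_forall_ne (hA i) ih

/-- In a system of two components working in mode `t ∧ Δ1`, a nonterminal next to the rewritten one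
survives the step, so after it neither component can rewrite that nonterminal. -/
theorem exists_mem_forall_ne_of_rStep (hG : G.deg ≤ 2) {i j : Fin G.deg}
    (hx : Exhausted (G.comp i) x) (h2 : 2 ≤ ntCount x) (hs : RStep (G.comp j) x y)
    (hy : Exhausted (G.comp j) y) :
    ∃ A, Sum.inl A ∈ y ∧ ∀ l, ∀ r ∈ G.comp l, r.1 ≠ A := by
  have hij : i ≠ j := by
    rintro rfl
    exact hx.not_rStep hs
  have hl (l : Fin G.deg) : l = i ∨ l = j := by omega
  obtain ⟨r, -, u, v, rfl, rfl⟩ := hs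
  obtain ⟨A, hA⟩ : ∃ A, Sum.inl A ∈ u ++ v := by
    refine ntCount_pos_iff.1 ?_
    rw [ntCount_append, ntCount_cons_inl] at h2
    rw [ntCount_append]
    omega
  have hAx : Sum.inl A ∈ u ++ Sum.inl r.1 :: v := by grind
  have hAy : Sum.inl A ∈ u ++ r.2 ++ v := by grind
  refine ⟨A, hAy, fun l r' hr' hr'A => ?_⟩
  rcases hl l with rfl | rfl
  · exact hx r' hr' (hr'A ▸ hAx)
  · exact hy r' hr' (hr'A ▸ hAy)

theorem ntCount_le_one_of_derivesIn (hG : G.deg ≤ 2) (hf : f.HasMaxSteps T 1) {i : Fin G.deg}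
    (hx : Exhausted (G.comp i) x)
    (h : G.DerivesIn (.conj .t f) x (ofWord w)) : ntCount x ≤ 1 := by
  by_contra! h2
  induction h using Relation.ReflTransGen.head_induction_on with
  | refl => exact absurd h2 (by simp [ntCount_ofWord])
  | head hstep hy ih =>
    rcases hstep.eq_or_rStep hf with rfl | ⟨j, hs, hj⟩
    · exact ih hx h2
    · obtain ⟨A, hA, hne⟩ := exists_mem_forall_ne_of_rStep hG hx h2 hs hj
      exact not_derivesIn_of_forall_ne hne hA hy

open scoped Classical in
/-- The linear grammar of those rules of `G` whose component cannot be applied to their own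
right-hand side. In mode `t ∧ Δ1`, no other rule takes part in a terminating derivation of a system
of two components. -/
noncomputable def linearPart (G : CDGS T) : CFG T where
  start := G.start
  rules := (List.finRange G.deg).flatMap fun i =>
    (G.comp i).filter fun r => ntCount r.2 ≤ 1 ∧ Exhausted (G.comp i) r.2

theorem mem_rules_linearPart {r : Rule T} : r ∈ G.linearPart.rules ↔
    ∃ i, r ∈ G.comp i ∧ ntCount r.2 ≤ 1 ∧ Exhausted (G.comp i) r.2 := by
  simp [linearPart]

theorem linear_linearPart (G : CDGS T) : G.linearPart.Linear := fun _ hr =>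
  (mem_rules_linearPart.1 hr).choose_spec.2.1

theorem rStep_linearPart {i : Fin G.deg} (hs : RStep (G.comp i) x y)
    (hy : Exhausted (G.comp i) y) (hy1 : ntCount y ≤ 1) : RStep G.linearPart.rules x y := by
  obtain ⟨r, hr, u, v, rfl, rfl⟩ := hs
  refine RStep.of_mem (mem_rules_linearPart.2 ⟨i, hr, ?_, fun r' hr' hmem => ?_⟩) u v
  · rw [ntCount_append, ntCount_append] at hy1
    change ntCount r.2 ≤ 1
    omega
  · exact hy r' hr' (by simp [hmem])

theorem modeStep_of_rStep_linearPart (hf : f.HasMaxSteps T 1) (hx : ntCount x ≤ 1)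
    (hs : RStep G.linearPart.rules x y) : G.ModeStep (.conj .t f) x y := by
  obtain ⟨r, hr, u, v, rfl, rfl⟩ := hs.exists_of_ntCount_le_one hx
  obtain ⟨i, hri, -, hex⟩ := mem_rules_linearPart.1 hr
  refine modeStep_t_of_stepsN hf ⟨_, .of_mem hri _ _, rfl⟩ fun r' hr' hmem => hex r' hr' ?_
  simpa using hmem

theorem derivesIn_of_derives_linearPart (hf : f.HasMaxSteps T 1) (hx : ntCount x ≤ 1)
    (h : Derives G.linearPart.rules x y) : G.DerivesIn (.conj .t f) x y := by
  induction h with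
  | refl => exact .refl
  | tail hxz hs ih =>
    have hz := G.linear_linearPart.ntCount_le_one_of_derives hxz hx
    exact ih.tail (modeStep_of_rStep_linearPart hf hz hs)

theorem derives_linearPart_of_derivesIn (hG : G.deg ≤ 2) (hf : f.HasMaxSteps T 1)
    (h : G.DerivesIn (.conj .t f) x (ofWord w)) : Derives G.linearPart.rules x (ofWord w) := by
  induction h using Relation.ReflTransGen.head_induction_on with
  | refl => exact .refl
  | head hstep hy ih =>
    rcases hstep.eq_or_rStep hf with rfl | ⟨i, hs, hex⟩
    · exact ih
    · exact ih.head (rStep_linearPart hs hex (ntCount_le_one_of_derivesIn hG hf hex hy))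

theorem lang_linearPart (hG : G.deg ≤ 2) (hf : f.HasMaxSteps T 1) :
    G.linearPart.lang = G.lang (.conj .t f) :=
  Set.ext fun _ => ⟨fun h => mem_lang_iff.2 (derivesIn_of_derives_linearPart hf le_rfl h),
    fun h => derives_linearPart_of_derivesIn hG hf (mem_lang_iff.1 h)⟩

end CDGS

end TwoComponents

section LinearLanguages

variable {T : Type}

/-- The linear languages, `lf = true` restricting to grammars without erasing rules;
`LinFamily T false` is `LinFam T`. -/
def LinFamily (T : Type) (lf : Bool) : Set (Set (List T)) :=
  { L | ∃ H : CFG T, H.Linear ∧ (lf = true → ∀ r ∈ H.rules, r.2 ≠ []) ∧ EqL H.lang L }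

theorem EqL.mem_iff {L₁ L₂ : Set (List T)} (h : EqL L₁ L₂) {w : List T} (hw : w ≠ []) :
    w ∈ L₁ ↔ w ∈ L₂ := by
  simpa [hw] using Set.ext_iff.1 h w

namespace CFG

/-- Attach the phase `i` to every nonterminal: `A` becomes `2 A + i`. -/
def phase (i : Fin 2) : SForm T → SForm T := List.map (Sum.map (fun A => 2 * A + i) id)

/-- Forget the phases of all nonterminals. -/
def unphase : SForm T → SForm T := List.map (Sum.map (· / 2) id)

theorem unphase_phase (i : Fin 2) (x : SForm T) : unphase (phase i x) = x := by
  have : (Sum.map (· / 2) id ∘ Sum.map (2 * · + (i : ℕ)) id : Symb T → Symb T) = id := by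
    funext s
    rcases s with A | a
    · simp only [Function.comp_apply, Sum.map_inl, id_eq, Sum.inl.injEq]
      omega
    · rfl
  rw [unphase, phase, List.map_map, this, List.map_id]

theorem phase_ofWord (i : Fin 2) (w : List T) : phase i (ofWord w) = ofWord w := by
  simp [phase]

theorem unphase_ofWord (w : List T) : unphase (ofWord w) = ofWord w := by
  simp [unphase]

theorem phase_append (i : Fin 2) (x y : SForm T) : phase i (x ++ y) = phase i x ++ phase i y :=
  List.map_append

theorem phase_ofWord_append_append (i : Fin 2) (u v : List T) (x : SForm T) :
    phase i (ofWord u ++ x ++ ofWord v) = ofWord u ++ phase i x ++ ofWord v := by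
  rw [phase_append, phase_append, phase_ofWord, phase_ofWord]

theorem mod_two_of_inl_mem_phase {i : Fin 2} {B : ℕ} {x : SForm T} (h : Sum.inl B ∈ phase i x) :
    B % 2 = i := by
  simp only [phase, List.mem_map, Sum.exists, Sum.map_inl, Sum.inl.injEq, Sum.map_inr, reduceCtorEq,
    and_false, exists_false, or_false] at h
  omega

/-- The rules of phase `i` simulating `H`: they move the nonterminals of phase `i` to phase `1 - i`,
and idle by `A → A` to reach any prescribed number of steps. -/
def phaseRules (H : CFG T) (i : Fin 2) : List (Rule T) :=
  H.rules.map (fun r => ((2 * r.1 + i : ℕ), [Sum.inl (2 * r.1 + i : ℕ)])) ++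
    H.rules.map fun r => ((2 * r.1 + i : ℕ), phase (1 - i) r.2)

/-- The system of two components simulating the linear grammar `H` by alternating between the
phases. -/
def alternating (H : CFG T) : CDGS T where
  deg := 2
  start := 2 * H.start
  comp := H.phaseRules

variable {H : CFG T} {x y : SForm T} {w : List T}

theorem mem_phaseRules {i : Fin 2} {r : Rule T} : r ∈ H.phaseRules i ↔
    ∃ s ∈ H.rules, r.1 = 2 * s.1 + i ∧ (r.2 = [Sum.inl r.1] ∨ r.2 = phase (1 - i) s.2) := by
  obtain ⟨A, z⟩ := r
  simp only [phaseRules, List.mem_append, List.mem_map, Prod.mk.injEq]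
  constructor
  · rintro (⟨s, hs, rfl, rfl⟩ | ⟨s, hs, rfl, rfl⟩)
    · exact ⟨s, hs, rfl, .inl rfl⟩
    · exact ⟨s, hs, rfl, .inr rfl⟩
  · rintro ⟨s, hs, rfl, rfl | rfl⟩
    · exact .inl ⟨s, hs, rfl, rfl⟩
    · exact .inr ⟨s, hs, rfl, rfl⟩

theorem derives_unphase {i : Fin 2} (h : Derives (H.phaseRules i) x y) :
    Derives H.rules (unphase x) (unphase y) := by
  refine h.lift' unphase fun x y ⟨r, hr, u, v, hx, hy⟩ => ?_
  obtain ⟨s, hs, hr1, hr2⟩ := mem_phaseRules.1 hr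
  subst hx hy
  rcases hr2 with hr2 | hr2
  · rw [hr2, ← List.append_cons]
  · refine .single ?_
    have hA : r.1 / 2 = s.1 := by omega
    have hstep := RStep.of_mem (show (s.1, s.2) ∈ H.rules from hs) (unphase u) (unphase v)
    rw [← unphase_phase (1 - i) s.2, ← hr2, ← hA] at hstep
    simpa [unphase] using hstep

theorem mem_lang_of_mem_lang_alternating {f : Mode} (h : w ∈ H.alternating.lang f) :
    w ∈ H.lang := by
  have h' : Derives H.rules (unphase [Sum.inl (2 * H.start)]) (unphase (ofWord w)) :=
    (CDGS.mem_lang_iff.1 h).lift' unphase fun _ _ hxy =>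
      derives_unphase hxy.exists_derives.choose_spec
  rw [unphase_ofWord] at h'
  simpa [unphase, lang] using h'

theorem modeStep_alternating {f : Mode} {k : ℕ} (hf : f.HasMaxSteps T k) (hk : 1 ≤ k)
    (hx : ntCount x ≤ 1) (hs : RStep H.rules x y) (i : Fin 2) :
    H.alternating.ModeStep (.conj .t f) (phase i x) (phase (1 - i) y) := by
  obtain ⟨r, hr, u, v, rfl, rfl⟩ := hs.exists_of_ntCount_le_one hx
  have hex : Exhausted (H.phaseRules i) (phase (1 - i) (ofWord u ++ r.2 ++ ofWord v)) := by
    intro s hs hmem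
    obtain ⟨r', -, hr', -⟩ := mem_phaseRules.1 hs
    have := mod_two_of_inl_mem_phase hmem
    omega
  rw [phase_ofWord_append_append] at hex ⊢
  rw [List.append_cons, phase_ofWord_append_append, List.append_assoc]
  exact CDGS.modeStep_t_of_loop (G := H.alternating) (i := i) hf hk
    (mem_phaseRules.2 ⟨r, hr, rfl, .inl rfl⟩) (mem_phaseRules.2 ⟨r, hr, rfl, .inr rfl⟩)
    (ofWord u) (ofWord v) hex

theorem lang_alternating (hH : H.Linear) {f : Mode} {k : ℕ} (hf : f.HasMaxSteps T k)
    (hk : 1 ≤ k) : H.alternating.lang (.conj .t f) = H.lang := by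
  refine Set.Subset.antisymm (fun w => mem_lang_of_mem_lang_alternating) fun w hw => ?_
  suffices ∀ y, Derives H.rules [Sum.inl H.start] y →
      ∃ i, H.alternating.DerivesIn (.conj .t f) [Sum.inl H.alternating.start] (phase i y) by
    obtain ⟨i, hi⟩ := this _ hw
    exact CDGS.mem_lang_iff.2 (phase_ofWord i w ▸ hi)
  intro y h
  induction h with
  | refl => exact ⟨0, .refl⟩
  | tail hy hs ih =>
    obtain ⟨i, hi⟩ := ih
    have hy1 := hH.ntCount_le_one_of_derives hy le_rfl
    exact ⟨1 - i, hi.tail (modeStep_alternating hf hk hy1 hs i)⟩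

theorem lamFree_alternating (hH : ∀ r ∈ H.rules, r.2 ≠ []) : H.alternating.LamFree := by
  intro (i : Fin 2) r hr
  obtain ⟨s, hs, -, hr2 | hr2⟩ := mem_phaseRules.1 hr
  · simp [hr2]
  · simpa [hr2, phase] using hH s hs

end CFG

theorem linFamily_subset_cdFam_two (lf : Bool) {f : Mode} {k : ℕ} (hf : f.HasMaxSteps T k)
    (hk : 1 ≤ k) : LinFamily T lf ⊆ CDFam T lf 2 (.conj .t f) := by
  rintro L ⟨H, hH, hlf, hL⟩
  exact ⟨H.alternating, Nat.le_refl 2, fun h => CFG.lamFree_alternating (hlf h),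
    CFG.lang_alternating hH hf hk ▸ hL⟩

theorem cdFam_two_eq_linFamily (lf : Bool) {f : Mode} (hf : f.HasMaxSteps T 1) :
    CDFam T lf 2 (.conj .t f) = LinFamily T lf := by
  refine Set.Subset.antisymm ?_ (linFamily_subset_cdFam_two lf hf le_rfl)
  rintro L ⟨G, hG, hlf, hL⟩
  refine ⟨G.linearPart, G.linear_linearPart, fun h r hr => ?_, CDGS.lang_linearPart hG hf ▸ hL⟩
  obtain ⟨i, hri, -⟩ := CDGS.mem_rules_linearPart.1 hr
  exact hlf h i r hri

end LinearLanguages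

section FiniteLanguages

variable {T : Type}

/-- The grammar with the rules `S → w` for `w ∈ F`. -/
noncomputable def finiteGrammar (F : Finset (List T)) : CFG T where
  start := 0
  rules := F.toList.map fun w => (0, ofWord w)

theorem mem_rules_finiteGrammar {F : Finset (List T)} {r : Rule T} :
    r ∈ (finiteGrammar F).rules ↔ ∃ w ∈ F, r = (0, ofWord w) := by
  simp [finiteGrammar, eq_comm]

theorem lang_finiteGrammar (F : Finset (List T)) : (finiteGrammar F).lang = F := by
  ext w
  constructor
  · intro h
    obtain hw | ⟨_, ⟨r, hr, u, v, hx, rfl⟩, hzw⟩ := Relation.ReflTransGen.cases_head h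
    · exact absurd (hw ▸ List.mem_singleton_self _) (inl_notMem_ofWord _ w)
    · obtain ⟨w', hw', rfl⟩ := mem_rules_finiteGrammar.1 hr
      obtain ⟨rfl, -, rfl⟩ : u = [] ∧ _ ∧ v = [] := by
        simpa [List.append_eq_singleton_iff, List.singleton_eq_append_iff] using hx
      have hzw' : Derives (finiteGrammar F).rules (ofWord w') (ofWord w) := by simpa using hzw
      exact ofWord_injective ((exhausted_ofWord _ w').eq_of_derives hzw') ▸ hw'
  · intro hw
    exact .single ⟨_, mem_rules_finiteGrammar.2 ⟨w, hw, rfl⟩, [], [], rfl, by simp⟩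

theorem mem_linFamily_of_finite (lf : Bool) {L : Set (List T)} (hL : (L \ {[]}).Finite) :
    L ∈ LinFamily T lf := by
  refine ⟨finiteGrammar hL.toFinset, fun r hr => ?_, fun _ r hr => ?_, ?_⟩
  · obtain ⟨w, -, rfl⟩ := mem_rules_finiteGrammar.1 hr
    exact (ntCount_ofWord w).trans_le zero_le_one
  · obtain ⟨w, hw, rfl⟩ := mem_rules_finiteGrammar.1 hr
    simpa using (hL.mem_toFinset.1 hw).2
  · simp [EqL, lang_finiteGrammar]

/-- The grammar `S → a S | a`. -/
def rightLinearGrammar (a : T) : CFG T where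
  start := 0
  rules := [(0, [Sum.inr a, Sum.inl 0]), (0, [Sum.inr a])]

theorem replicate_mem_lang_rightLinearGrammar (a : T) (n : ℕ) :
    List.replicate (n + 1) a ∈ (rightLinearGrammar a).lang := by
  induction n with
  | zero => exact .single ⟨_, List.mem_cons_of_mem _ (List.mem_singleton_self _), [], [], rfl, rfl⟩
  | succ n ih =>
    refine Relation.ReflTransGen.head ⟨_, List.mem_cons_self, [], [], rfl, rfl⟩ ?_
    have hstep := Derives.append ih [Sum.inr a] []
    rwa [List.append_nil, List.append_nil] at hstep

theorem rightLinearGrammar_lang_mem_linFamily (lf : Bool) (a : T) :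
    (rightLinearGrammar a).lang ∈ LinFamily T lf :=
  ⟨_, by simp [CFG.Linear, rightLinearGrammar, ntCount, List.filter], by simp [rightLinearGrammar],
    rfl⟩

theorem infinite_lang_rightLinearGrammar (a : T) : (rightLinearGrammar a).lang.Infinite :=
  Set.infinite_of_injective_forall_mem
    ((List.replicate_left_injective a).comp (add_left_injective 1))
    (replicate_mem_lang_rightLinearGrammar a)

theorem cdFam_one_ssubset_linFamily [Nonempty T] (lf : Bool) {f : Mode} {k : ℕ}
    (hf : f.HasMaxSteps T k) : CDFam T lf 1 (.conj .t f) ⊂ LinFamily T lf := by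
  have hfin : ∀ L ∈ CDFam T lf 1 (.conj .t f), (L \ {[]}).Finite := by
    rintro L ⟨G, hG, -, hL⟩
    exact ((CDGS.finite_lang_of_deg_le_one hG hf).subset Set.sdiff_subset).subset hL.ge
  refine ⟨fun L hL => mem_linFamily_of_finite lf (hfin L hL), fun h => ?_⟩
  obtain ⟨a⟩ := ‹Nonempty T›
  exact ((infinite_lang_rightLinearGrammar a).sdiff (Set.finite_singleton []))
    (hfin _ (h (rightLinearGrammar_lang_mem_linFamily lf a)))

end FiniteLanguages

section ThreeComponents

variable {T : Type} {a b : T}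

/-- `aⁿ x bⁿ`. -/
def nest (a b : T) (n : ℕ) (x : SForm T) : SForm T :=
  ofWord (List.replicate n a) ++ x ++ ofWord (List.replicate n b)

/-- The word `aⁿ bⁿ aⁿ bⁿ`. -/
def doubleNest (a b : T) (n : ℕ) : List T :=
  List.replicate n a ++ List.replicate n b ++ (List.replicate n a ++ List.replicate n b)

theorem nest_nest (a b : T) (m n : ℕ) (x : SForm T) :
    nest a b m (nest a b n x) = nest a b (m + n) x := by
  rw [nest, nest, nest, List.replicate_add, add_comm m n, List.replicate_add]
  simp only [List.map_append, List.append_assoc]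

/-- The rules `i → i`, `i → (i + 1)(i + 2)`, `i → a (i + 2) b` and `i → a b`, whose nonterminals
are residues modulo three. -/
def nestingRules (a b : T) (i : Fin 3) : List (Rule T) :=
  [(i, [Sum.inl ↑i]), (i, [Sum.inl ↑(i + 1), Sum.inl ↑(i + 2)]),
    (i, nest a b 1 [Sum.inl ↑(i + 2)]), (i, nest a b 1 [])]

/-- The system of three components generating the words `aⁿ bⁿ aⁿ bⁿ` among balanced words. Of the
two nonterminals of a form `aⁿ i bⁿ aⁿ (i + 1) bⁿ`, the third residue is always free to become the
new name of the one just rewritten, so that both remain alive under the mode `t`. -/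
def nesting (a b : T) : CDGS T where
  deg := 3
  start := 0
  comp := nestingRules a b

theorem lamFree_nesting (a b : T) : (nesting a b).LamFree := by
  intro (i : Fin 3)
  change ∀ r ∈ nestingRules a b i, r.2 ≠ []
  simp [nestingRules, nest]

theorem exhausted_nestingRules {i : Fin 3} {x : SForm T} (h : Sum.inl ↑i ∉ x) :
    Exhausted (nestingRules a b i) x := by
  have hlhs : ∀ r ∈ nestingRules a b i, r.1 = i := by simp [nestingRules]
  exact fun r hr => hlhs r hr ▸ h

variable {f : Mode} {k : ℕ}

theorem modeStep_nesting (hf : f.HasMaxSteps T k) (hk : 1 ≤ k) {i : Fin 3} {z : SForm T}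
    (hz : (↑i, z) ∈ nestingRules a b i) (n : ℕ) (x y : SForm T)
    (hx : Sum.inl ↑i ∉ x ++ z ++ y) :
    (nesting a b).ModeStep (.conj .t f) (x ++ nest a b n [Sum.inl ↑i] ++ y)
      (x ++ nest a b n z ++ y) := by
  have hstep := CDGS.modeStep_t_of_loop (G := nesting a b) (i := i) hf hk List.mem_cons_self hz
    (x ++ ofWord (List.replicate n a)) (ofWord (List.replicate n b) ++ y)
    (exhausted_nestingRules (by simpa using hx))
  simpa [nest] using hstep

theorem derivesIn_nest_succ (hf : f.HasMaxSteps T k) (hk : 1 ≤ k) (n : ℕ) (i : Fin 3) :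
    (nesting a b).DerivesIn (.conj .t f)
      (nest a b n [Sum.inl ↑i] ++ nest a b n [Sum.inl ↑(i + 1)])
      (nest a b (n + 1) [Sum.inl ↑(i + 2)] ++ nest a b (n + 1) [Sum.inl ↑i]) := by
  have h₁ := modeStep_nesting (a := a) (b := b) hf hk (i := i)
    (z := nest a b 1 [Sum.inl ↑(i + 2)]) (by simp [nestingRules]) n
    [] (nest a b n [Sum.inl ↑(i + 1)]) (by simp [nest, Fin.val_inj])
  have h₂ := modeStep_nesting (a := a) (b := b) hf hk (i := i + 1)
    (z := nest a b 1 [Sum.inl ↑i]) (by simp [nestingRules, add_assoc]) n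
    (nest a b (n + 1) [Sum.inl ↑(i + 2)]) [] (by simp [nest, Fin.val_inj])
  rw [List.nil_append, List.nil_append, nest_nest] at h₁
  rw [List.append_nil, List.append_nil, nest_nest] at h₂
  exact .head h₁ (.single h₂)

theorem exists_derivesIn_nest (hf : f.HasMaxSteps T k) (hk : 1 ≤ k) (n : ℕ) :
    ∃ i : Fin 3, (nesting a b).DerivesIn (.conj .t f) [Sum.inl (nesting a b).start]
      (nest a b n [Sum.inl ↑i] ++ nest a b n [Sum.inl ↑(i + 1)]) := by
  induction n with
  | zero =>
    have h := modeStep_nesting (a := a) (b := b) hf hk (i := 0) (z := [Sum.inl 1, Sum.inl 2])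
      (by simp [nestingRules]) 0 [] [] (by simp)
    exact ⟨1, .single h⟩
  | succ n ih =>
    obtain ⟨i, hi⟩ := ih
    refine ⟨i + 2, hi.trans ?_⟩
    have hi' : i + 2 + 1 = i := by simp [add_assoc]
    exact hi'.symm ▸ derivesIn_nest_succ hf hk n i

theorem doubleNest_mem_lang_nesting (hf : f.HasMaxSteps T k) (hk : 1 ≤ k) (n : ℕ) :
    doubleNest a b (n + 1) ∈ (nesting a b).lang (.conj .t f) := by
  obtain ⟨i, hi⟩ := exists_derivesIn_nest (a := a) (b := b) hf hk n
  refine CDGS.mem_lang_iff.2 (hi.trans ?_)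
  have h₁ := modeStep_nesting (a := a) (b := b) hf hk (i := i)
    (z := nest a b 1 []) (by simp [nestingRules]) n
    [] (nest a b n [Sum.inl ↑(i + 1)]) (by simp [nest, Fin.val_inj])
  have h₂ := modeStep_nesting (a := a) (b := b) hf hk (i := i + 1)
    (z := nest a b 1 []) (by simp [nestingRules]) n
    (nest a b (n + 1) []) [] (by simp [nest])
  rw [List.nil_append, List.nil_append, nest_nest] at h₁
  rw [List.append_nil, List.append_nil, nest_nest] at h₂
  have hword : ofWord (doubleNest a b (n + 1)) = nest a b (n + 1) [] ++ nest a b (n + 1) [] := by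
    simp [doubleNest, nest]
  exact hword ▸ .head h₁ (.single h₂)

end ThreeComponents

section BalancedWords

variable {T : Type} {a b : T}

/-- The word of the terminals of a sentential form. -/
def terminals : SForm T → List T := List.filterMap Sum.getRight?

theorem terminals_append (x y : SForm T) : terminals (x ++ y) = terminals x ++ terminals y :=
  List.filterMap_append

theorem terminals_cons_inl (A : ℕ) (x : SForm T) : terminals (Sum.inl A :: x) = terminals x := rfl

theorem terminals_ofWord (w : List T) : terminals (ofWord w) = w := by
  rw [terminals, List.filterMap_map]
  exact List.filterMap_some

theorem terminals_of_mem_nestingRules {i : Fin 3} {r : Rule T} (hr : r ∈ nestingRules a b i) :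
    terminals r.2 = [] ∨ terminals r.2 = [a, b] := by
  simp only [nestingRules, List.mem_cons, List.not_mem_nil, or_false] at hr
  rcases hr with rfl | rfl | rfl | rfl
  exacts [.inl rfl, .inl rfl, .inr rfl, .inr rfl]

theorem eq_replicate_of_doubleNest_eq {n : ℕ} {u x v : List T}
    (h : doubleNest a b n = u ++ x ++ v) (hu : u.length ≤ n) (hv : v.length ≤ n) :
    u = List.replicate u.length a ∧ v = List.replicate v.length b := by
  have hu' : u <+: List.replicate n a :=
    List.prefix_of_prefix_length_le (l₃ := doubleNest a b n) ⟨x ++ v, by rw [h, List.append_assoc]⟩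
      ⟨_, (List.append_assoc ..).symm⟩ (by simpa using hu)
  have hv' : v <:+ List.replicate n b :=
    List.suffix_of_suffix_length_le (l₃ := doubleNest a b n) ⟨u ++ x, h.symm⟩
      ⟨_, List.append_assoc ..⟩ (by simpa using hv)
  exact ⟨(List.prefix_replicate_iff.1 hu').2, (List.suffix_replicate_iff.1 hv').2⟩

theorem exists_eq_append_of_doubleNest_eq {i j n : ℕ} {x : List T}
    (h : doubleNest a b n = List.replicate i a ++ x ++ List.replicate j b) (hij : i + j ≤ n) :
    ∃ y, x = List.replicate (n - i) a ++ List.replicate n b ++ y := by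
  have hsplit : List.replicate n a = List.replicate i a ++ List.replicate (n - i) a := by
    rw [← List.replicate_add, Nat.add_sub_cancel' (by omega)]
  have hx : x ++ List.replicate j b = List.replicate (n - i) a ++ List.replicate n b ++
      (List.replicate n a ++ List.replicate n b) := by
    refine List.append_cancel_left (as := List.replicate i a) ?_
    rw [← List.append_assoc, ← h, doubleNest]
    nth_rw 1 [hsplit]
    simp only [List.append_assoc]
  have hprefix : List.replicate (n - i) a ++ List.replicate n b <+: x := by
    refine List.prefix_of_prefix_length_le ⟨_, hx.symm⟩ (List.prefix_append ..) ?_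
    have := congrArg List.length hx
    simp only [List.length_append, List.length_replicate] at this ⊢
    omega
  exact hprefix.imp fun _ => Eq.symm

variable [DecidableEq T]

/-- `w` has as many letters `a` as `b`, and no prefix of `w` has more letters `b` than `a`: read as
opening and closing brackets, these letters form a Dyck word. -/
def IsBalanced (a b : T) (w : List T) : Prop :=
  w.count a = w.count b ∧ ∀ p, p <+: w → p.count b ≤ p.count a

theorem IsBalanced.nil (a b : T) : IsBalanced a b [] := by
  simp [IsBalanced]

theorem IsBalanced.insert {u v : List T} (hab : a ≠ b) (h : IsBalanced a b (u ++ v)) :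
    IsBalanced a b (u ++ [a, b] ++ v) := by
  refine ⟨by simpa [hab, hab.symm, ← add_assoc, add_right_comm _ 1] using h.1, fun p hp => ?_⟩
  obtain ⟨q, hq⟩ := hp
  rw [List.append_assoc, List.append_eq_append_iff] at hq
  rcases hq with ⟨s, rfl, -⟩ | ⟨s, rfl, hs⟩
  · exact h.2 p ⟨s ++ v, by simp⟩
  · have hu := h.2 u ⟨v, rfl⟩
    rcases s with _ | ⟨_, _ | ⟨_, s⟩⟩
    · simpa using hu
    · obtain ⟨rfl, -⟩ := List.cons.inj hs
      simp only [List.count_append, List.count_singleton_self, List.count_singleton,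
        beq_iff_eq, hab, if_false]
      omega
    · obtain ⟨⟨rfl, rfl⟩, rfl⟩ : (a = _ ∧ b = _) ∧ v = s ++ q := by simpa [and_assoc] using hs
      have := h.2 (u ++ s) ⟨q, by simp⟩
      simp only [List.count_append, List.count_cons_self, ne_eq, hab, hab.symm, not_false_eq_true,
        List.count_cons_of_ne] at this ⊢
      omega

theorem IsBalanced.of_derives (hab : a ≠ b) {i : Fin 3} {x y : SForm T}
    (h : Derives (nestingRules a b i) x y) (hx : IsBalanced a b (terminals x)) :
    IsBalanced a b (terminals y) := by
  induction h with
  | refl => exact hx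
  | tail _ hs ih =>
    obtain ⟨r, hr, u, v, rfl, rfl⟩ := hs
    rw [terminals_append, terminals_cons_inl] at ih
    rw [terminals_append, terminals_append]
    rcases terminals_of_mem_nestingRules hr with h | h
    · rwa [h, List.append_nil]
    · exact h ▸ ih.insert hab

theorem isBalanced_of_mem_lang_nesting (hab : a ≠ b) {f : Mode} {w : List T}
    (hw : w ∈ (nesting a b).lang f) : IsBalanced a b w := by
  suffices ∀ x, (nesting a b).DerivesIn f [Sum.inl (nesting a b).start] x →
      IsBalanced a b (terminals x) from
    terminals_ofWord w ▸ this _ (CDGS.mem_lang_iff.1 hw)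
  intro x h
  induction h with
  | refl => exact .nil a b
  | tail _ hstep ih =>
    obtain ⟨i, hi⟩ := hstep.exists_derives
    exact .of_derives hab hi ih

/-- In an interchange of cores, the equal numbers of letters `a` and `b` force the contexts
`aⁱ ⋯ bʲ` and `aⁱ' ⋯ bʲ'` to satisfy `i < i'`, so that after `aⁱ` the core `aⁿ⁻ⁱ' bⁿ ⋯` closes more
brackets than have been opened. -/
theorem not_isBalanced_of_interchange (hab : a ≠ b) {m n : ℕ} {u x v u' x' v' : List T}
    (hm : doubleNest a b m = u ++ x ++ v) (hn : doubleNest a b n = u' ++ x' ++ v')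
    (huv : u.length + v.length ≤ m) (huv' : u'.length + v'.length ≤ n)
    (hlt : u.length + v.length < u'.length + v'.length) : ¬ IsBalanced a b (u ++ x' ++ v) := by
  rintro ⟨hcount, hprefix⟩
  obtain ⟨hu, hv⟩ := eq_replicate_of_doubleNest_eq hm (by omega) (by omega)
  obtain ⟨hu', hv'⟩ := eq_replicate_of_doubleNest_eq hn (by omega) (by omega)
  generalize u.length = i, v.length = j, u'.length = i', v'.length = j' at *
  subst hu hv hu' hv'
  have ha := congrArg (List.count a) hn
  have hb := congrArg (List.count b) hn
  simp only [doubleNest, List.count_append, List.count_replicate, beq_iff_eq, hab, hab.symm,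
    if_true, if_false] at ha hb hcount
  have : i < i' := by omega
  obtain ⟨y, rfl⟩ := exists_eq_append_of_doubleNest_eq hn huv'
  have hle := hprefix (List.replicate i a ++ (List.replicate (n - i') a ++ List.replicate n b))
    ⟨y ++ List.replicate j b, by simp only [List.append_assoc]⟩
  simp only [List.count_append, List.count_replicate, beq_iff_eq, hab, hab.symm, if_true,
    if_false] at hle
  omega

theorem CFG.Linear.exists_not_isBalanced {H : CFG T} (hH : H.Linear) (hab : a ≠ b)
    (h : ∀ n, doubleNest a b (n + 1) ∈ H.lang) : ∃ w ∈ H.lang, ¬ IsBalanced a b w := by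
  obtain ⟨m, n, u, x, v, u', x', v', hm, hn, huv, huv', hlt, hmem⟩ :=
    hH.exists_interchange h fun n => by
      simp only [doubleNest, List.length_append, List.length_replicate]
      omega
  exact ⟨_, hmem, not_isBalanced_of_interchange hab hm hn (by omega) (by omega) hlt⟩

end BalancedWords

section Hierarchy

variable {T : Type}

theorem cdFam_mono (lf : Bool) (f : Mode) : Monotone fun n => CDFam T lf n f :=
  fun _ _ hmn _ ⟨G, hG, h⟩ => ⟨G, hG.trans hmn, h⟩

theorem lang_nesting_notMem_linFamily {a b : T} (hab : a ≠ b) (lf : Bool) {f : Mode} {k : ℕ}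
    (hf : f.HasMaxSteps T k) (hk : 1 ≤ k) :
    (nesting a b).lang (.conj .t f) ∉ LinFamily T lf := by
  classical
  rintro ⟨H, hH, -, hL⟩
  have hmem (n : ℕ) : doubleNest a b (n + 1) ∈ H.lang :=
    (hL.mem_iff (by simp [doubleNest])).2 (doubleNest_mem_lang_nesting hf hk n)
  obtain ⟨w, hw, hbal⟩ := hH.exists_not_isBalanced hab hmem
  have hne : w ≠ [] := fun h => hbal (h ▸ .nil a b)
  exact hbal (isBalanced_of_mem_lang_nesting hab ((hL.mem_iff hne).1 hw))

theorem linFamily_ssubset_cdFam_three [Nontrivial T] (lf : Bool) {f : Mode} {k : ℕ}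
    (hf : f.HasMaxSteps T k) (hk : 1 ≤ k) : LinFamily T lf ⊂ CDFam T lf 3 (.conj .t f) := by
  obtain ⟨a, b, hab⟩ := exists_pair_ne T
  refine ⟨(linFamily_subset_cdFam_two lf hf hk).trans (cdFam_mono lf _ (Nat.le_succ 2)),
    fun h => lang_nesting_notMem_linFamily hab lf hf hk (h ?_)⟩
  exact ⟨nesting a b, Nat.le_refl 3, fun _ => lamFree_nesting a b, rfl⟩

end Hierarchy

theorem stmt11_general {T : Type} [Nontrivial T] (lf : Bool) {f g : Mode} {k : ℕ} (hk : 1 ≤ k)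
    (hf : f.HasMaxSteps T 1) (hg : g.HasMaxSteps T k) :
    CDFam T lf 1 (.conj .t g) ⊂ CDFam T lf 2 (.conj .t f) ∧
      CDFam T lf 2 (.conj .t f) ⊂ CDFam T lf 3 (.conj .t g) := by
  rw [cdFam_two_eq_linFamily lf hf]
  exact ⟨cdFam_one_ssubset_linFamily lf hg, linFamily_ssubset_cdFam_three lf hg hk⟩

/-- For every k ∈ ℕ (positive) and every Δ ∈ {≤, =},
L(CD_1, CF[−λ], (t∧Δk)) ⊊ L(CD_2, CF[−λ], (t∧Δ1)) ⊊ L(CD_3, CF[−λ], (t∧Δk)),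
both with and without erasing rules. -/
theorem stmt11 (lf : Bool) (k : ℕ) (hk : 1 ≤ k) (d : ℕ → Mode)
    (hd : d = Mode.le ∨ d = Mode.eq) :
    CDFam ℕ lf 1 (Mode.conj Mode.t (d k)) ⊂ CDFam ℕ lf 2 (Mode.conj Mode.t (d 1)) ∧
    CDFam ℕ lf 2 (Mode.conj Mode.t (d 1)) ⊂ CDFam ℕ lf 3 (Mode.conj Mode.t (d k)) := by
  rcases hd with rfl | rfl
  · exact stmt11_general lf hk (Mode.hasMaxSteps_le ℕ 1) (Mode.hasMaxSteps_le ℕ k)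
  · exact stmt11_general lf hk (Mode.hasMaxSteps_eq ℕ 1) (Mode.hasMaxSteps_eq ℕ k)

end CDHybrid
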